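/- For every positive integer b there exists a positive integer k = k(b) such that for every finite set A of integers with |A| ≥ 2, either the k-fold sumset satisfies |kA| > |A|^b, or the k-fold product set satisfies |A^{(k)}| > |A|^b. -/

import Mathlib

open Pointwise

/-!
Say that a set of positive integers has query complexity at most `n` if each of its elements can be
identified by asking adaptively for at most `n` of its `p`-adic valuations.

Sets of low query complexity have large sumsets (Chang). In a solution of
`x₁ + ⋯ + x_k = y₁ + ⋯ + y_k` the smallest `p`-adic valuation is attained at least twice, so by
Young's inequality the `2k`-th moment of the exponential sum of `A`, normalised by `#A ^ k`, grows
at most by the factor `(2k) ^ (2k)` with each query.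

Sets with small product sets have large subsets of low query complexity. Let `γ` be the largest size
of a subset of `A` of complexity at most `log_M #A`, and give `A` the weight
`#A ^ (1 / 2 + gain) * γ ^ (-gain)`. The product of the weights of `A` and `B` bounds `#(A * B)`
from below: split `A` and `B` into fibres of a `p`-adic valuation, use induction on the fibres, and
recombine them with the inequality `∑ h ≥ ∑ f² + ∑ g² - 1`, valid when `f i * g j ≤ h (i + j)` and
`f`, `g` have maximum `1`, or with `∑ h ≥ f i₀ * ∑ g` if the fibre `i₀` is almost everything. For
`A = B` this says `#(A * A) ≥ #A * (#A / γ) ^ (2 * gain)`.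

Finally, if `#(A ^ 2 ^ l) ≤ #A ^ b` for a large `l`, then some `B = A ^ 2 ^ i` has small doubling,
hence a large subset `B'` of low complexity. A most popular product in `A * B'` passes this on to a
large subset of `A`, whose sumset is therefore large.
-/

namespace SumProduct

open Finset

section LayerCake

variable {ι : Type*} (S : Finset ι) (F : ι → ℝ)

lemma antitone_card_filter_le : Antitone fun t : ℝ ↦ (#{i ∈ S | t ≤ F i} : ℝ) :=
  fun _ _ h ↦ Nat.cast_le.2 <| card_le_card <| monotone_filter_right S fun _ _ ↦ h.trans

variable {S F} in
lemma integral_card_filter_le {m : ℝ} (hF₀ : ∀ i ∈ S, 0 ≤ F i)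
    (hFm : ∀ i ∈ S, F i ≤ m) : ∫ t in (0 : ℝ)..m, (#{i ∈ S | t ≤ F i} : ℝ) = ∑ i ∈ S, F i := by
  have card_eq_sum (t : ℝ) :
      (#{i ∈ S | t ≤ F i} : ℝ) = ∑ i ∈ S, (Set.Iic (F i)).indicator 1 t := by
    simp [Set.indicator_apply]
  have integrable_indicator (w : ℝ) : IntervalIntegrable ((Set.Iic w).indicator (1 : ℝ → ℝ))
      MeasureTheory.volume 0 m :=
    ⟨(MeasureTheory.integrable_const 1).indicator measurableSet_Iic,
      (MeasureTheory.integrable_const 1).indicator measurableSet_Iic⟩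
  simp_rw [card_eq_sum]
  rw [intervalIntegral.integral_finsetSum fun i _ ↦ integrable_indicator _]
  refine sum_congr rfl fun i hi ↦ ?_
  exact (intervalIntegral.integral_indicator (f := 1) ⟨hF₀ i hi, hFm i hi⟩).trans (by simp)

end LayerCake

section DiscretePrekopaLeindler

variable {G : Type*} [AddCommMonoid G] [LinearOrder G] [IsOrderedCancelAddMonoid G]
  {I J : Finset G} {f g h : G → ℝ} {i₀ j₀ : G}

-- Integrate over `t ∈ [0, m]` the Cauchy–Davenport inequality for the level sets `{t ≤ f}` and
-- `{t ≤ g}`, which are nonempty and whose sumset lies in `{t ≤ h}`.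
lemma sum_add_sum_sub_le_sum_add {m : ℝ} (hf₀ : ∀ i ∈ I, 0 ≤ f i) (hg₀ : ∀ j ∈ J, 0 ≤ g j)
    (hfm : ∀ i ∈ I, f i ≤ m) (hgm : ∀ j ∈ J, g j ≤ m) (hi₀ : i₀ ∈ I) (hj₀ : j₀ ∈ J)
    (hfi₀ : f i₀ = m) (hgj₀ : g j₀ = m) (hh₀ : ∀ s, 0 ≤ h s)
    (hh : ∀ i ∈ I, ∀ j ∈ J, min (f i) (g j) ≤ h (i + j)) :
    ∑ i ∈ I, f i + ∑ j ∈ J, g j - m ≤ ∑ s ∈ I + J, h s := by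
  have hm : 0 ≤ m := hfi₀ ▸ hf₀ i₀ hi₀
  have level_sets : ∀ t ∈ Set.Icc 0 m,
      (#{i ∈ I | t ≤ f i} : ℝ) + #{j ∈ J | t ≤ g j} - 1 ≤ #{s ∈ I + J | t ≤ min (h s) m} := by
    intro t ht
    have cauchy_davenport := cauchy_davenport_add_of_linearOrder_isCancelAdd
      (s := {i ∈ I | t ≤ f i}) (t := {j ∈ J | t ≤ g j})
      ⟨i₀, by simp [hi₀, hfi₀, ht.2]⟩ ⟨j₀, by simp [hj₀, hgj₀, ht.2]⟩
    have sumset_subset : ({i ∈ I | t ≤ f i} + {j ∈ J | t ≤ g j} : Finset G) ⊆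
        {s ∈ I + J | t ≤ min (h s) m} := by
      simp only [add_subset_iff, mem_filter, le_min_iff]
      exact fun i hi j hj ↦
        ⟨add_mem_add hi.1 hj.1, (le_min hi.2 hj.2).trans (hh i hi.1 j hj.1), ht.2⟩
    rw [sub_le_iff_le_add]
    exact_mod_cast Nat.sub_le_iff_le_add.1 (cauchy_davenport.trans (card_le_card sumset_subset))
  have integrable (S : Finset G) (F : G → ℝ) : IntervalIntegrable
      (fun t ↦ (#{i ∈ S | t ≤ F i} : ℝ)) MeasureTheory.volume 0 m :=
    (antitone_card_filter_le S F).intervalIntegrable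
  have integral_mono := intervalIntegral.integral_mono_on hm
    (((integrable I f).add (integrable J g)).sub intervalIntegrable_const)
    (integrable (I + J) fun s ↦ min (h s) m) level_sets
  rw [intervalIntegral.integral_sub ((integrable I f).add (integrable J g))
      intervalIntegrable_const, intervalIntegral.integral_add (integrable I f) (integrable J g),
    integral_card_filter_le hf₀ hfm, integral_card_filter_le hg₀ hgm,
    integral_card_filter_le (fun s _ ↦ le_min (hh₀ s) hm) (fun s _ ↦ min_le_right _ _),
    intervalIntegral.integral_const, sub_zero, smul_eq_mul, mul_one] at integral_mono
  exact integral_mono.trans (sum_le_sum fun s _ ↦ min_le_left _ _)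

lemma mul_sum_le_sum_add (hi₀ : i₀ ∈ I) (hh₀ : ∀ s, 0 ≤ h s)
    (hh : ∀ i ∈ I, ∀ j ∈ J, f i * g j ≤ h (i + j)) :
    f i₀ * ∑ j ∈ J, g j ≤ ∑ s ∈ I + J, h s := calc
  f i₀ * ∑ j ∈ J, g j = ∑ j ∈ J, f i₀ * g j := mul_sum ..
  _ ≤ ∑ j ∈ J, h (i₀ + j) := sum_le_sum fun j hj ↦ hh i₀ hi₀ j hj
  _ = ∑ s ∈ J.map (addLeftEmbedding i₀), h s := by simp
  _ ≤ ∑ s ∈ I + J, h s := by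
    refine sum_le_sum_of_subset_of_nonneg (fun s hs ↦ ?_) fun s _ _ ↦ hh₀ s
    obtain ⟨j, hj, rfl⟩ := mem_map.1 hs
    exact add_mem_add hi₀ hj

lemma sum_sq_mul_add_sum_sq_mul_sub_le (hf₀ : ∀ i ∈ I, 0 ≤ f i) (hg₀ : ∀ j ∈ J, 0 ≤ g j)
    (hi₀ : i₀ ∈ I) (hj₀ : j₀ ∈ J) (hf_max : ∀ i ∈ I, f i ≤ f i₀) (hg_max : ∀ j ∈ J, g j ≤ g j₀)
    (hh₀ : ∀ s, 0 ≤ h s) (hh : ∀ i ∈ I, ∀ j ∈ J, f i * g j ≤ h (i + j)) :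
    (∑ i ∈ I, f i ^ 2) * g j₀ ^ 2 + (∑ j ∈ J, g j ^ 2) * f i₀ ^ 2 - (f i₀ * g j₀) ^ 2 ≤
      (∑ s ∈ I + J, h s) * (f i₀ * g j₀) := by
  have hα := hf₀ i₀ hi₀
  have hβ := hg₀ j₀ hj₀
  simp only [sum_mul, ← mul_pow]
  refine sum_add_sum_sub_le_sum_add (fun _ _ ↦ sq_nonneg _) (fun _ _ ↦ sq_nonneg _)
    (fun i hi ↦ ?_) (fun j hj ↦ ?_) hi₀ hj₀ rfl (by rw [mul_comm])
    (fun s ↦ mul_nonneg (hh₀ s) (mul_nonneg hα hβ)) fun i hi j hj ↦ ?_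
  · exact pow_le_pow_left₀ (mul_nonneg (hf₀ i hi) hβ) (by gcongr; exact hf_max i hi) 2
  · rw [mul_comm (f i₀)]
    exact pow_le_pow_left₀ (mul_nonneg (hg₀ j hj) hα) (by gcongr; exact hg_max j hj) 2
  · have hx : 0 ≤ f i * g j₀ := mul_nonneg (hf₀ i hi) hβ
    have hy : 0 ≤ g j * f i₀ := mul_nonneg (hg₀ j hj) hα
    calc min ((f i * g j₀) ^ 2) ((g j * f i₀) ^ 2)
        ≤ f i * g j₀ * (g j * f i₀) := by
          rcases le_total (f i * g j₀) (g j * f i₀) with hxy | hxy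
          · exact min_le_of_left_le (by rw [sq]; gcongr)
          · exact min_le_of_right_le (by rw [sq]; gcongr)
      _ = f i * g j * (f i₀ * g j₀) := by ring
      _ ≤ h (i + j) * (f i₀ * g j₀) := by gcongr; exact hh i hi j hj

end DiscretePrekopaLeindler

section Dichotomy

variable {ι : Type*}

/-- One of the two shapes of a family `f` with `∑ f² ≈ 1`: the largest term `f i₀` carries almost
all of it. The constants `80/81` here and `81/80` in `IsSpread` are mutually inverse. -/
def IsConcentrated (I : Finset ι) (f : ι → ℝ) (i₀ : ι) : Prop :=
  80 / 81 ≤ f i₀ ∧ 1 ≤ f i₀ * ∑ i ∈ I, f i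

/-- The other shape of a family `f` with `∑ f² ≈ 1` and largest term `f i₀`: a definite proportion
of it lies off `i₀`. -/
def IsSpread (I : Finset ι) (f : ι → ℝ) (i₀ : ι) : Prop :=
  1 + f i₀ ^ 2 ≤ 2 * ∑ i ∈ I, f i ^ 2 ∧ 81 / 80 ≤ ∑ i ∈ I, f i

variable {G : Type*} [AddCommMonoid G] [LinearOrder G] [IsOrderedCancelAddMonoid G]
  {I J : Finset G} {f g h : G → ℝ} {i₀ j₀ : G}

lemma IsConcentrated.one_le_sum_add_of_isSpread (hf : IsConcentrated I f i₀) (hg : IsSpread J g j₀)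
    (hi₀ : i₀ ∈ I) (hh₀ : ∀ s, 0 ≤ h s) (hh : ∀ i ∈ I, ∀ j ∈ J, f i * g j ≤ h (i + j)) :
    1 ≤ ∑ s ∈ I + J, h s := calc
  (1 : ℝ) = 80 / 81 * (81 / 80) := by norm_num
  _ ≤ f i₀ * ∑ j ∈ J, g j := by
    gcongr
    exacts [le_trans (by norm_num) hf.1, hf.1, hg.2]
  _ ≤ _ := mul_sum_le_sum_add hi₀ hh₀ hh

lemma IsConcentrated.one_le_sum_add (hf : IsConcentrated I f i₀) (hg : IsConcentrated J g j₀)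
    (hi₀ : i₀ ∈ I) (hj₀ : j₀ ∈ J) (hh₀ : ∀ s, 0 ≤ h s)
    (hh : ∀ i ∈ I, ∀ j ∈ J, f i * g j ≤ h (i + j)) : 1 ≤ ∑ s ∈ I + J, h s := by
  have hI : f i₀ * ∑ j ∈ J, g j ≤ ∑ s ∈ I + J, h s := mul_sum_le_sum_add hi₀ hh₀ hh
  have hJ : g j₀ * ∑ i ∈ I, f i ≤ ∑ s ∈ I + J, h s := by
    rw [add_comm I]
    exact mul_sum_le_sum_add hj₀ hh₀ fun j hj i hi ↦ by
      rw [mul_comm, add_comm]; exact hh i hi j hj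
  have hg_sum : 0 ≤ g j₀ * ∑ i ∈ I, f i := by
    have hα : 0 < f i₀ := lt_of_lt_of_le (by norm_num) hf.1
    have hβ : 0 ≤ g j₀ := le_trans (by norm_num) hg.1
    exact mul_nonneg hβ (pos_of_mul_pos_right (zero_lt_one.trans_le hf.2) hα.le).le
  rw [← one_le_sq_iff₀ (hg_sum.trans hJ)]
  calc (1 : ℝ) ≤ (f i₀ * ∑ i ∈ I, f i) * (g j₀ * ∑ j ∈ J, g j) :=
        one_le_mul_of_one_le_of_one_le hf.2 hg.2
    _ = (f i₀ * ∑ j ∈ J, g j) * (g j₀ * ∑ i ∈ I, f i) := by ring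
    _ ≤ (∑ s ∈ I + J, h s) ^ 2 := by
      rw [sq]; exact mul_le_mul hI hJ hg_sum (hg_sum.trans hJ)

lemma IsSpread.one_le_sum_add (hf : IsSpread I f i₀) (hg : IsSpread J g j₀)
    (hf_pos : ∀ i ∈ I, 0 < f i) (hg_pos : ∀ j ∈ J, 0 < g j)
    (hi₀ : i₀ ∈ I) (hj₀ : j₀ ∈ J) (hf_max : ∀ i ∈ I, f i ≤ f i₀) (hg_max : ∀ j ∈ J, g j ≤ g j₀)
    (hh₀ : ∀ s, 0 ≤ h s) (hh : ∀ i ∈ I, ∀ j ∈ J, f i * g j ≤ h (i + j)) :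
    1 ≤ ∑ s ∈ I + J, h s := by
  have hαβ : 0 < f i₀ * g j₀ := mul_pos (hf_pos i₀ hi₀) (hg_pos j₀ hj₀)
  refine le_of_mul_le_mul_right ?_ hαβ
  calc 1 * (f i₀ * g j₀) ≤ (f i₀ ^ 2 + g j₀ ^ 2) / 2 := by
        linarith [two_mul_le_add_sq (f i₀) (g j₀)]
    _ = (1 + f i₀ ^ 2) / 2 * g j₀ ^ 2 + (1 + g j₀ ^ 2) / 2 * f i₀ ^ 2 - (f i₀ * g j₀) ^ 2 := by ring
    _ ≤ (∑ i ∈ I, f i ^ 2) * g j₀ ^ 2 + (∑ j ∈ J, g j ^ 2) * f i₀ ^ 2 - (f i₀ * g j₀) ^ 2 := by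
      gcongr <;> linarith [hf.1, hg.1]
    _ ≤ _ := sum_sq_mul_add_sum_sq_mul_sub_le (fun i hi ↦ (hf_pos i hi).le)
      (fun j hj ↦ (hg_pos j hj).le) hi₀ hj₀ hf_max hg_max hh₀ hh

lemma one_le_sum_add (hf : IsConcentrated I f i₀ ∨ IsSpread I f i₀)
    (hg : IsConcentrated J g j₀ ∨ IsSpread J g j₀)
    (hf_pos : ∀ i ∈ I, 0 < f i) (hg_pos : ∀ j ∈ J, 0 < g j)
    (hi₀ : i₀ ∈ I) (hj₀ : j₀ ∈ J) (hf_max : ∀ i ∈ I, f i ≤ f i₀) (hg_max : ∀ j ∈ J, g j ≤ g j₀)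
    (hh₀ : ∀ s, 0 ≤ h s) (hh : ∀ i ∈ I, ∀ j ∈ J, f i * g j ≤ h (i + j)) :
    1 ≤ ∑ s ∈ I + J, h s := by
  rcases hf with hf | hf <;> rcases hg with hg | hg
  · exact hf.one_le_sum_add hg hi₀ hj₀ hh₀ hh
  · exact hf.one_le_sum_add_of_isSpread hg hi₀ hh₀ hh
  · rw [add_comm I]
    exact hg.one_le_sum_add_of_isSpread hf hj₀ hh₀ fun j hj i hi ↦ by
      rw [mul_comm, add_comm]; exact hh i hi j hj
  · exact hf.one_le_sum_add hg hf_pos hg_pos hi₀ hj₀ hf_max hg_max hh₀ hh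

end Dichotomy

section Weight

variable {M : ℕ} {a γ : ℝ}

/-- The exponent gained over `1 / 2` in the size of product sets, see `weight`. -/
noncomputable def gain (M : ℕ) : ℝ := 1 / (400 * (M + 1))

lemma gain_pos (M : ℕ) : 0 < gain M := by unfold gain; positivity

lemma gain_le (M : ℕ) : gain M ≤ 1 / 4 := by
  unfold gain
  gcongr
  linarith [M.cast_nonneg (α := ℝ)]

/-- The weight of a set of size `a` whose largest part of low query complexity has size `γ`. Weights
are to be supermultiplicative under product sets, so that `weight M #A γ ^ 2 ≤ #(A * A)`. -/
noncomputable def weight (M : ℕ) (a γ : ℝ) : ℝ := a ^ (1 / 2 + gain M) * γ ^ (-gain M)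

lemma weight_pos (ha : 0 < a) (hγ : 0 < γ) : 0 < weight M a γ := by unfold weight; positivity

lemma weight_div {a' γ' : ℝ} (ha : 0 ≤ a) (ha' : 0 ≤ a') (hγ : 0 ≤ γ) (hγ' : 0 ≤ γ') :
    weight M (a / a') (γ / γ') = weight M a γ / weight M a' γ' := by
  rw [weight, weight, weight, Real.div_rpow ha ha', Real.div_rpow hγ hγ', div_mul_div_comm]

lemma rpow_le_weight (ha : 0 < a) (ha₁ : a ≤ 1) (hγ : 0 < γ) (hγ₁ : γ ≤ 1) :
    a ^ (3 / 4 : ℝ) ≤ weight M a γ := calc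
  a ^ (3 / 4 : ℝ) ≤ a ^ (1 / 2 + gain M) :=
    Real.rpow_le_rpow_of_exponent_ge ha ha₁ (by linarith [gain_le M])
  _ ≤ weight M a γ := le_mul_of_one_le_right (by positivity) <|
    Real.one_le_rpow_of_pos_of_le_one_of_nonpos hγ hγ₁ (neg_nonpos.2 (gain_pos M).le)

lemma add_mul_sub_le_weight_sq (ha : 0 < a) (hγ : 0 < γ) :
    a + 2 * gain M * (a - γ) ≤ weight M a γ ^ 2 := by
  have weight_sq : weight M a γ ^ 2 = a * Real.exp (2 * gain M * Real.log (a / γ)) := by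
    rw [weight, Real.rpow_def_of_pos ha, Real.rpow_def_of_pos hγ, ← Real.exp_add,
      ← Real.exp_nat_mul, Real.log_div ha.ne' hγ.ne']
    nth_rewrite 2 [← Real.exp_log ha]
    rw [← Real.exp_add]
    congr 1
    push_cast
    ring
  have hgain := gain_pos M
  calc a + 2 * gain M * (a - γ) = a * (2 * gain M * (1 - (a / γ)⁻¹) + 1) := by
        field_simp
        ring
    _ ≤ a * (2 * gain M * Real.log (a / γ) + 1) := by
        gcongr
        exact Real.one_sub_inv_le_log_of_pos (by positivity)
    _ ≤ weight M a γ ^ 2 := by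
        rw [weight_sq]
        gcongr
        exact Real.add_one_le_exp _

end Weight

section PowerSums

variable {ι : Type*} {S I : Finset ι} {a : ι → ℝ} {z : ℝ}

lemma le_mul_rpow_of_le_pow_four {x : ℝ} (hx : 0 ≤ x) (hz : 0 ≤ z) (hxz : x ≤ z ^ 4) :
    x ≤ z * x ^ (3 / 4 : ℝ) := calc
  x = x ^ (1 / 4 : ℝ) * x ^ (3 / 4 : ℝ) := by
    rw [← Real.rpow_add_of_nonneg hx (by norm_num) (by norm_num)]; norm_num
  _ ≤ (z ^ 4) ^ (1 / 4 : ℝ) * x ^ (3 / 4 : ℝ) := by gcongr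
  _ = z * x ^ (3 / 4 : ℝ) := by
    rw [← Real.rpow_natCast, ← Real.rpow_mul hz]; norm_num

lemma sum_le_mul_sum_rpow (ha : ∀ i ∈ S, 0 ≤ a i) (hz : 0 ≤ z) (haz : ∀ i ∈ S, a i ≤ z ^ 4) :
    ∑ i ∈ S, a i ≤ z * ∑ i ∈ S, a i ^ (3 / 4 : ℝ) := by
  rw [mul_sum]
  exact sum_le_sum fun i hi ↦ le_mul_rpow_of_le_pow_four (ha i hi) hz (haz i hi)

lemma exists_add_pow_three_le_sum_rpow {k : ι} (ha : ∀ i ∈ I, 0 ≤ a i) (hsum : ∑ i ∈ I, a i = 1)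
    (hk : k ∈ I) :
    ∃ z, 0 ≤ z ∧ z ^ 4 = 1 - a k ∧ a k + z ^ 3 ≤ ∑ i ∈ I, a i ^ (3 / 4 : ℝ) := by
  classical
  have ha_erase : ∀ i ∈ I.erase k, 0 ≤ a i := fun i hi ↦ ha i (mem_of_mem_erase hi)
  have sum_erase : ∑ i ∈ I.erase k, a i = 1 - a k := by
    rw [← hsum, ← add_sum_erase _ _ hk, add_sub_cancel_left]
  have hak : 0 ≤ 1 - a k := sum_erase ▸ sum_nonneg ha_erase
  obtain ⟨z, hz, hkz⟩ : ∃ z : ℝ, 0 ≤ z ∧ z ^ 4 = 1 - a k :=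
    ⟨(1 - a k) ^ (1 / 4 : ℝ), Real.rpow_nonneg hak _, by
      rw [← Real.rpow_mul_natCast hak]; norm_num⟩
  have pow_three_le : z ^ 3 ≤ ∑ i ∈ I.erase k, a i ^ (3 / 4 : ℝ) := by
    rcases hz.eq_or_lt with rfl | hz_pos
    · simpa using sum_nonneg fun i hi ↦ Real.rpow_nonneg (ha_erase i hi) _
    refine le_of_mul_le_mul_left ?_ hz_pos
    calc z * z ^ 3 = ∑ i ∈ I.erase k, a i := by rw [sum_erase, ← hkz]; ring
      _ ≤ z * ∑ i ∈ I.erase k, a i ^ (3 / 4 : ℝ) := sum_le_mul_sum_rpow ha_erase hz fun i hi ↦ by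
        rw [hkz, ← sum_erase]; exact single_le_sum ha_erase hi
  have hk_le : a k ≤ a k ^ (3 / 4 : ℝ) :=
    Real.self_le_rpow_of_le_one (ha k hk) (sub_nonneg.1 hak) (by norm_num)
  refine ⟨z, hz, hkz, ?_⟩
  rw [← add_sum_erase _ _ hk]
  exact add_le_add hk_le pow_three_le

end PowerSums

/-- The relative sizes `a i` of the fibres of a set, and the sizes `γ i` of their parts of low query
complexity relative to that of the whole set. Fibres making up less than `1 / M` of the set are
cheap: the union of their parts is again of low complexity, whence `sum_easy_le_one`. -/
structure FibreProfile {ι : Type*} (M : ℕ) (I : Finset ι) (a γ : ι → ℝ) : Prop where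
  size_pos : ∀ i ∈ I, 0 < a i
  sum_size : ∑ i ∈ I, a i = 1
  easy_pos : ∀ i ∈ I, 0 < γ i
  easy_le_one : ∀ i ∈ I, γ i ≤ 1
  sum_easy_le_one : ∑ i ∈ I with a i * M ≤ 1, γ i ≤ 1

namespace FibreProfile

variable {ι : Type*} {M : ℕ} {I S : Finset ι} {a γ : ι → ℝ} {i₀ k : ι}

lemma size_le_one (h : FibreProfile M I a γ) (hk : k ∈ I) : a k ≤ 1 :=
  h.sum_size ▸ single_le_sum (fun i hi ↦ (h.size_pos i hi).le) hk

lemma rpow_le_weight (h : FibreProfile M I a γ) (hk : k ∈ I) :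
    a k ^ (3 / 4 : ℝ) ≤ weight M (a k) (γ k) :=
  SumProduct.rpow_le_weight (h.size_pos k hk) (h.size_le_one hk) (h.easy_pos k hk)
    (h.easy_le_one k hk)

lemma le_weight (h : FibreProfile M I a γ) (hk : k ∈ I) : a k ≤ weight M (a k) (γ k) :=
  (Real.self_le_rpow_of_le_one (h.size_pos k hk).le (h.size_le_one hk) (by norm_num)).trans
    (h.rpow_le_weight hk)

lemma sum_sub_le_sum_weight_sq (h : FibreProfile M I a γ) (hS : S ⊆ I) :
    ∑ i ∈ S, a i - 1 / 200 ≤ ∑ i ∈ S, weight M (a i) (γ i) ^ 2 := by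
  have hgain := gain_pos M
  have termwise : ∀ i ∈ S, a i - 2 * gain M * ((if a i * M ≤ 1 then γ i else 0) + M * a i) ≤
      weight M (a i) (γ i) ^ 2 := by
    intro i hi
    have ha := h.size_pos i (hS hi)
    refine le_trans ?_ (add_mul_sub_le_weight_sq ha (h.easy_pos i (hS hi)))
    rw [sub_eq_add_neg, ← mul_neg]
    gcongr
    have hMa : 0 ≤ M * a i := by positivity
    split_ifs with hlight
    · linarith
    · linarith [h.easy_le_one i (hS hi)]
  have sum_easy : ∑ i ∈ S, (if a i * M ≤ 1 then γ i else 0) ≤ 1 := by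
    rw [← sum_filter]
    exact (sum_le_sum_of_subset_of_nonneg (filter_subset_filter _ hS)
      fun i hi _ ↦ (h.easy_pos i (mem_filter.1 hi).1).le).trans h.sum_easy_le_one
  have sum_size : ∑ i ∈ S, a i ≤ 1 :=
    h.sum_size ▸ sum_le_sum_of_subset_of_nonneg hS fun i hi _ ↦ (h.size_pos i hi).le
  calc ∑ i ∈ S, a i - 1 / 200 = ∑ i ∈ S, a i - 2 * gain M * (1 + M * 1) := by
        rw [gain]; field_simp; ring
    _ ≤ ∑ i ∈ S, a i -
        2 * gain M * (∑ i ∈ S, (if a i * M ≤ 1 then γ i else 0) + M * ∑ i ∈ S, a i) := by gcongr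
    _ = ∑ i ∈ S, (a i - 2 * gain M * ((if a i * M ≤ 1 then γ i else 0) + M * a i)) := by
        rw [sum_sub_distrib, ← mul_sum, sum_add_distrib, ← mul_sum]
    _ ≤ _ := sum_le_sum termwise

lemma sum_rpow_le_sum_weight (h : FibreProfile M I a γ) :
    ∑ i ∈ I, a i ^ (3 / 4 : ℝ) ≤ ∑ i ∈ I, weight M (a i) (γ i) :=
  sum_le_sum fun _ ↦ h.rpow_le_weight

lemma isConcentrated (h : FibreProfile M I a γ) (hk : k ∈ I) (hak : 80 / 81 ≤ a k)
    (hmax : ∀ i ∈ I, weight M (a i) (γ i) ≤ weight M (a i₀) (γ i₀)) :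
    IsConcentrated I (fun i ↦ weight M (a i) (γ i)) i₀ := by
  have hα : a k ≤ weight M (a i₀) (γ i₀) := (h.le_weight hk).trans (hmax k hk)
  refine ⟨hak.trans hα, ?_⟩
  obtain ⟨z, hz, hkz, hsum⟩ := exists_add_pow_three_le_sum_rpow
    (fun i hi ↦ (h.size_pos i hi).le) h.sum_size hk
  have hz_le : z ≤ 1 / 3 := le_of_pow_le_pow_left₀ four_ne_zero (by norm_num) (by linarith)
  calc (1 : ℝ) ≤ 1 + z ^ 3 * (1 - 2 * z - z ^ 4 * (1 - z)) := by
        have : z ^ 4 * (1 - z) ≤ 1 / 81 * 1 := by gcongr <;> linarith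
        exact le_add_of_nonneg_right (mul_nonneg (pow_nonneg hz 3) (by linarith))
    _ = a k * (a k + z ^ 3) := by rw [show a k = 1 - z ^ 4 by linarith]; ring
    _ ≤ _ := mul_le_mul hα (hsum.trans h.sum_rpow_le_sum_weight)
        (add_nonneg (h.size_pos k hk).le (pow_nonneg hz 3)) ((h.size_pos k hk).le.trans hα)

lemma le_sum_weight (h : FibreProfile M I a γ) (hlt : ∀ i ∈ I, a i < 80 / 81) :
    81 / 80 ≤ ∑ i ∈ I, weight M (a i) (γ i) := by
  refine le_trans ?_ h.sum_rpow_le_sum_weight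
  have ha : ∀ i ∈ I, 0 ≤ a i := fun i hi ↦ (h.size_pos i hi).le
  by_cases! hk : ∃ k ∈ I, 1 / 2 ≤ a k
  · obtain ⟨k, hk, hak⟩ := hk
    obtain ⟨z, hz, hkz, hsum⟩ := exists_add_pow_three_le_sum_rpow ha h.sum_size hk
    have hz_le : z ≤ 17 / 20 := le_of_pow_le_pow_left₀ four_ne_zero (by norm_num) (by linarith)
    have le_hz : 1 / 3 ≤ z := le_of_pow_le_pow_left₀ four_ne_zero hz (by linarith [hlt k hk])
    calc (81 / 80 : ℝ) ≤ 1 + (1 / 3) ^ 2 * (z * (1 - z)) := by nlinarith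
      _ ≤ 1 + z ^ 2 * (z * (1 - z)) := by gcongr; exact mul_nonneg hz (by linarith)
      _ = a k + z ^ 3 := by rw [show a k = 1 - z ^ 4 by linarith]; ring
      _ ≤ _ := hsum
  · have := sum_le_mul_sum_rpow (z := 17 / 20) ha (by norm_num) fun i hi ↦
      (hk i hi).le.trans (by norm_num)
    linarith [h.sum_size]

lemma isSpread (h : FibreProfile M I a γ) (hi₀ : i₀ ∈ I) (hlt : ∀ i ∈ I, a i < 80 / 81) :
    IsSpread I (fun i ↦ weight M (a i) (γ i)) i₀ := by
  classical
  refine ⟨?_, h.le_sum_weight hlt⟩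
  have sum_erase : ∑ i ∈ I.erase i₀, a i = 1 - a i₀ := by
    rw [← h.sum_size, ← add_sum_erase _ _ hi₀, add_sub_cancel_left]
  have sq_erase : ∑ i ∈ I.erase i₀, weight M (a i) (γ i) ^ 2 =
      ∑ i ∈ I, weight M (a i) (γ i) ^ 2 - weight M (a i₀) (γ i₀) ^ 2 := by
    rw [← add_sum_erase _ _ hi₀, add_sub_cancel_left]
  linarith [h.sum_sub_le_sum_weight_sq subset_rfl, h.sum_size, hlt i₀ hi₀,
    h.sum_sub_le_sum_weight_sq (erase_subset i₀ I)]

lemma isConcentrated_or_isSpread (h : FibreProfile M I a γ) (hi₀ : i₀ ∈ I)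
    (hmax : ∀ i ∈ I, weight M (a i) (γ i) ≤ weight M (a i₀) (γ i₀)) :
    IsConcentrated I (fun i ↦ weight M (a i) (γ i)) i₀ ∨
      IsSpread I (fun i ↦ weight M (a i) (γ i)) i₀ := by
  by_cases! hk : ∃ k ∈ I, 80 / 81 ≤ a k
  · obtain ⟨k, hk, hak⟩ := hk
    exact .inl (h.isConcentrated hk hak hmax)
  · exact .inr (h.isSpread hi₀ hk)

end FibreProfile

section Fibres

variable {p : ℕ} {A B : Finset ℕ} {i x : ℕ}

/-- The elements of `A` of `p`-adic valuation `i`. -/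
def fibre (p : ℕ) (A : Finset ℕ) (i : ℕ) : Finset ℕ := {x ∈ A | x.factorization p = i}

/-- The set of `p`-adic valuations of the elements of `A`. -/
def valuations (p : ℕ) (A : Finset ℕ) : Finset ℕ := A.image (·.factorization p)

lemma mem_fibre : x ∈ fibre p A i ↔ x ∈ A ∧ x.factorization p = i := mem_filter

lemma fibre_subset (p : ℕ) (A : Finset ℕ) (i : ℕ) : fibre p A i ⊆ A := filter_subset _ _

lemma fibre_mono (h : A ⊆ B) : fibre p A i ⊆ fibre p B i := filter_subset_filter _ h

lemma fibre_nonempty : (fibre p A i).Nonempty ↔ i ∈ valuations p A := by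
  simp only [Finset.Nonempty, mem_fibre, valuations, mem_image]

lemma factorization_mem_valuations (hx : x ∈ A) : x.factorization p ∈ valuations p A :=
  mem_image_of_mem _ hx

lemma card_eq_sum_card_fibre (p : ℕ) (A : Finset ℕ) : #A = ∑ i ∈ valuations p A, #(fibre p A i) :=
  card_eq_sum_card_image _ A

lemma factorization_mul_apply (hA : 0 ∉ A) (hB : 0 ∉ B) (p : ℕ) {x y : ℕ} (hx : x ∈ A)
    (hy : y ∈ B) : (x * y).factorization p = x.factorization p + y.factorization p := by
  rw [Nat.factorization_mul (ne_of_mem_of_not_mem hx hA) (ne_of_mem_of_not_mem hy hB),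
    Finsupp.add_apply]

lemma fibre_mul_fibre_subset (hA : 0 ∉ A) (hB : 0 ∉ B) (p i j : ℕ) :
    fibre p A i * fibre p B j ⊆ fibre p (A * B) (i + j) := by
  simp only [mul_subset_iff, mem_fibre]
  rintro x ⟨hx, rfl⟩ y ⟨hy, rfl⟩
  exact ⟨mul_mem_mul hx hy, factorization_mul_apply hA hB p hx hy⟩

lemma card_mul_eq_sum_card_fibre (hA : 0 ∉ A) (hB : 0 ∉ B) (p : ℕ) :
    #(A * B) = ∑ s ∈ valuations p A + valuations p B, #(fibre p (A * B) s) := by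
  refine card_eq_sum_card_fiberwise fun z hz ↦ ?_
  obtain ⟨x, hx, y, hy, rfl⟩ := mem_mul.1 hz
  simp only [factorization_mul_apply hA hB p hx hy]
  exact add_mem_add (factorization_mem_valuations hx) (factorization_mem_valuations hy)

lemma exists_prime_card_fibre_lt (hA : 0 ∉ A) (hA₁ : 1 < #A) :
    ∃ p, p.Prime ∧ ∀ i, #(fibre p A i) < #A := by
  obtain ⟨a, ha, b, hb, hab⟩ := one_lt_card.1 hA₁
  obtain ⟨p, hp⟩ : ∃ p, a.factorization p ≠ b.factorization p := by
    contrapose! hab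
    exact Nat.eq_of_factorization_eq (ne_of_mem_of_not_mem ha hA) (ne_of_mem_of_not_mem hb hA) hab
  refine ⟨p, ?_, fun i ↦ card_lt_card ((fibre_subset p A i).ssubset_of_ne fun h ↦ hp ?_)⟩
  · by_contra hp'
    simp [Nat.factorization_eq_zero_of_not_prime _ hp'] at hp
  · rw [(mem_fibre.1 (h ▸ ha)).2, (mem_fibre.1 (h ▸ hb)).2]

end Fibres

section QueryComplexity

/-- `QueryComplexityLE n A` says that an unknown element of `A` can be identified by asking for at
most `n` of its `p`-adic valuations, where each prime `p` may depend on the previous answers. -/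
inductive QueryComplexityLE : ℕ → Finset ℕ → Prop
  | of_card_le_one {n : ℕ} {A : Finset ℕ} (h : #A ≤ 1) : QueryComplexityLE n A
  | query {n p : ℕ} {A : Finset ℕ} (hp : p.Prime) (h : ∀ i, QueryComplexityLE n (fibre p A i)) :
      QueryComplexityLE (n + 1) A

variable {M n : ℕ} {A B : Finset ℕ}

lemma QueryComplexityLE.mono (h : QueryComplexityLE n A) {m : ℕ} (hnm : n ≤ m) (hBA : B ⊆ A) :
    QueryComplexityLE m B := by
  induction h generalizing m B with
  | of_card_le_one h => exact .of_card_le_one ((card_le_card hBA).trans h)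
  | query hp _ ih =>
    obtain ⟨m, rfl⟩ := Nat.exists_eq_add_of_lt hnm
    exact .query hp fun i ↦ ih i (Nat.le_add_right ..) (fibre_mono hBA)

lemma QueryComplexityLE.of_mul_eq (h : QueryComplexityLE n B) {z : ℕ} (hz : z ≠ 0) (ψ : ℕ → ℕ)
    (hψB : ∀ a ∈ A, ψ a ∈ B) (hψz : ∀ a ∈ A, a * ψ a = z) : QueryComplexityLE n A := by
  induction h generalizing A with
  | of_card_le_one h =>
    refine .of_card_le_one (card_le_one.2 fun a ha b hb ↦ ?_)
    have hψa : ψ a ≠ 0 := right_ne_zero_of_mul (hψz a ha ▸ hz)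
    refine mul_right_cancel₀ hψa ?_
    rw [hψz a ha, card_le_one.1 h _ (hψB a ha) _ (hψB b hb), hψz b hb]
  | @query _ p _ hp _ ih =>
    refine .query hp fun i ↦ ih (z.factorization p - i) (fun a ha_fibre ↦ ?_)
      fun a ha ↦ hψz a (fibre_subset _ _ _ ha)
    obtain ⟨ha, rfl⟩ := mem_fibre.1 ha_fibre
    have hmul := hψz a ha ▸ hz
    refine mem_fibre.2 ⟨hψB a ha, ?_⟩
    rw [← hψz a ha, Nat.factorization_mul (left_ne_zero_of_mul hmul) (right_ne_zero_of_mul hmul),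
      Finsupp.add_apply, Nat.add_sub_cancel_left]

lemma QueryComplexityLE.biUnion {p : ℕ} (hp : p.Prime) {S : Finset ℕ} {B : ℕ → Finset ℕ}
    (hB : ∀ i ∈ S, QueryComplexityLE n (B i)) (hval : ∀ i ∈ S, ∀ x ∈ B i, x.factorization p = i) :
    QueryComplexityLE (n + 1) (S.biUnion B) := by
  have mem_of_mem_fibre {i x : ℕ} (hx : x ∈ fibre p (S.biUnion B) i) : i ∈ S ∧ x ∈ B i := by
    obtain ⟨hxB, rfl⟩ := mem_fibre.1 hx
    obtain ⟨j, hj, hxj⟩ := mem_biUnion.1 hxB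
    rw [hval j hj x hxj]
    exact ⟨hj, hxj⟩
  refine .query hp fun i ↦ ?_
  by_cases hi : i ∈ S
  · exact (hB i hi).mono le_rfl fun x hx ↦ (mem_of_mem_fibre hx).2
  · have : fibre p (S.biUnion B) i = ∅ :=
      eq_empty_of_forall_notMem fun x hx ↦ hi (mem_of_mem_fibre hx).1
    exact .of_card_le_one (by simp [this])

open Classical in
/-- The largest size of a subset of `A` of query complexity at most `log_M #A`. -/
noncomputable def easyCard (M : ℕ) (A : Finset ℕ) : ℕ :=
  {B ∈ A.powerset | QueryComplexityLE (Nat.log M #A) B}.sup card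

lemma card_le_easyCard (hBA : B ⊆ A) (hB : QueryComplexityLE (Nat.log M #A) B) :
    #B ≤ easyCard M A := by
  classical exact le_sup (f := card) (mem_filter.2 ⟨mem_powerset.2 hBA, hB⟩)

lemma exists_card_eq_easyCard (M : ℕ) (A : Finset ℕ) :
    ∃ B ⊆ A, QueryComplexityLE (Nat.log M #A) B ∧ #B = easyCard M A := by
  classical
  obtain ⟨B, hB, hcard⟩ := exists_mem_eq_sup {B ∈ A.powerset | QueryComplexityLE (Nat.log M #A) B}
    ⟨∅, by simpa using .of_card_le_one (by simp)⟩ card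
  obtain ⟨hBA, hB⟩ := mem_filter.1 hB
  exact ⟨B, mem_powerset.1 hBA, hB, hcard.symm⟩

lemma easyCard_pos (M : ℕ) (hA : A.Nonempty) : 0 < easyCard M A := by
  obtain ⟨a, ha⟩ := hA
  exact card_le_easyCard (B := {a}) (singleton_subset_iff.2 ha) (.of_card_le_one (by simp))

lemma easyCard_le_card (M : ℕ) (A : Finset ℕ) : easyCard M A ≤ #A := by
  obtain ⟨B, hBA, -, hB⟩ := exists_card_eq_easyCard M A
  exact hB ▸ card_le_card hBA

lemma easyCard_mono (M : ℕ) (h : A ⊆ B) : easyCard M A ≤ easyCard M B := by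
  obtain ⟨C, hCA, hC, hcard⟩ := exists_card_eq_easyCard M A
  exact hcard ▸ card_le_easyCard (hCA.trans h)
    (hC.mono (Nat.log_mono_right (card_le_card h)) subset_rfl)

-- One query finds out which fibre an element is in, and each of these fibres is so small that its
-- largest easy part has complexity at most `log_M #A - 1`.
lemma sum_easyCard_fibre_le (hM : 2 ≤ M) {p : ℕ} (hp : p.Prime) {S : Finset ℕ}
    (hS : S ⊆ valuations p A) (hsmall : ∀ i ∈ S, #(fibre p A i) * M ≤ #A) :
    ∑ i ∈ S, easyCard M (fibre p A i) ≤ easyCard M A := by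
  rcases S.eq_empty_or_nonempty with rfl | ⟨k, hk⟩
  · simp
  choose B hB_sub hB hB_card using fun i ↦ exists_card_eq_easyCard M (fibre p A i)
  have hlog : ∀ i ∈ S, Nat.log M #(fibre p A i) + 1 ≤ Nat.log M #A := by
    intro i hi
    rw [← Nat.log_mul_base hM (card_pos.2 (fibre_nonempty.2 (hS hi))).ne']
    exact Nat.log_mono_right (hsmall i hi)
  have hval : ∀ i, ∀ x ∈ B i, x.factorization p = i := fun i x hx ↦ (mem_fibre.1 (hB_sub i hx)).2
  have hdisj : (S : Set ℕ).PairwiseDisjoint B := fun i _ j _ hij ↦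
    disjoint_left.2 fun x hxi hxj ↦ hij ((hval i x hxi).symm.trans (hval j x hxj))
  calc ∑ i ∈ S, easyCard M (fibre p A i) = #(S.biUnion B) := by
        rw [card_biUnion hdisj]; exact sum_congr rfl fun i _ ↦ (hB_card i).symm
    _ ≤ easyCard M A := by
      refine card_le_easyCard
        (biUnion_subset.2 fun i _ ↦ (hB_sub i).trans (fibre_subset p A i)) ?_
      rw [← Nat.sub_add_cancel (Nat.le_of_add_left_le (hlog k hk))]
      exact .biUnion hp (fun i hi ↦ (hB i).mono (Nat.le_sub_of_add_le (hlog i hi)) subset_rfl)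
        fun i _ ↦ hval i

end QueryComplexity

section ProductGrowth

variable {M p : ℕ} {A B : Finset ℕ}

lemma fibreProfile_fibre (hM : 2 ≤ M) (hp : p.Prime) (hA : A.Nonempty) :
    FibreProfile M (valuations p A) (fun i ↦ (#(fibre p A i) / #A : ℝ))
      (fun i ↦ (easyCard M (fibre p A i) / easyCard M A : ℝ)) := by
  have hcard : (0 : ℝ) < #A := mod_cast card_pos.2 hA
  have heasy : (0 : ℝ) < easyCard M A := mod_cast easyCard_pos M hA
  refine ⟨fun i hi ↦ ?_, ?_, fun i hi ↦ ?_, fun i _ ↦ ?_, ?_⟩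
  · exact div_pos (mod_cast card_pos.2 (fibre_nonempty.2 hi)) hcard
  · rw [← sum_div, div_eq_one_iff_eq hcard.ne', card_eq_sum_card_fibre p A, Nat.cast_sum]
  · exact div_pos (mod_cast easyCard_pos M (fibre_nonempty.2 hi)) heasy
  · exact div_le_one_of_le₀ (mod_cast easyCard_mono M (fibre_subset p A i)) heasy.le
  · rw [← sum_div]
    refine div_le_one_of_le₀ (mod_cast sum_easyCard_fibre_le hM hp (filter_subset _ _) ?_) heasy.le
    intro i hi
    have := (mem_filter.1 hi).2
    rw [div_mul_eq_mul_div, div_le_one hcard] at this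
    exact_mod_cast this

/-- The weight of `A`, to be compared with the sizes of product sets. -/
noncomputable def setWeight (M : ℕ) (A : Finset ℕ) : ℝ := weight M #A (easyCard M A)

lemma setWeight_pos (M : ℕ) (hA : A.Nonempty) : 0 < setWeight M A :=
  weight_pos (mod_cast card_pos.2 hA) (mod_cast easyCard_pos M hA)

lemma setWeight_of_card_eq_one (M : ℕ) (hA : #A = 1) : setWeight M A = 1 := by
  have : easyCard M A = 1 :=
    le_antisymm (hA ▸ easyCard_le_card M A) (easyCard_pos M (card_pos.1 (hA ▸ one_pos)))
  simp [setWeight, weight, hA, this]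

lemma exists_isConcentrated_or_isSpread_setWeight (hM : 2 ≤ M) (hp : p.Prime) (hA : A.Nonempty) :
    ∃ i₀ ∈ valuations p A, (∀ i ∈ valuations p A,
        setWeight M (fibre p A i) / setWeight M A ≤ setWeight M (fibre p A i₀) / setWeight M A) ∧
      (IsConcentrated (valuations p A) (fun i ↦ setWeight M (fibre p A i) / setWeight M A) i₀ ∨
        IsSpread (valuations p A) (fun i ↦ setWeight M (fibre p A i) / setWeight M A) i₀) := by
  obtain ⟨i₀, hi₀, hmax⟩ := exists_max_image (valuations p A)
    (fun i ↦ setWeight M (fibre p A i) / setWeight M A) (hA.image _)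
  have profile := (fibreProfile_fibre hM hp hA).isConcentrated_or_isSpread hi₀
  simp only [weight_div, Nat.cast_nonneg] at profile
  exact ⟨i₀, hi₀, hmax, profile hmax⟩

lemma setWeight_mul_le_of_fibre (hM : 2 ≤ M) (hp : p.Prime) (hA : A.Nonempty) (hB : B.Nonempty)
    (hA₀ : 0 ∉ A) (hB₀ : 0 ∉ B)
    (hfibre : ∀ i ∈ valuations p A, ∀ j ∈ valuations p B,
      setWeight M (fibre p A i) * setWeight M (fibre p B j) ≤ #(fibre p A i * fibre p B j)) :
    setWeight M A * setWeight M B ≤ #(A * B) := by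
  have hwA := setWeight_pos M hA
  have hwB := setWeight_pos M hB
  obtain ⟨i₀, hi₀, hi_max, shapeA⟩ := exists_isConcentrated_or_isSpread_setWeight hM hp hA
  obtain ⟨j₀, hj₀, hj_max, shapeB⟩ := exists_isConcentrated_or_isSpread_setWeight hM hp hB
  have one_le_sum : 1 ≤ ∑ s ∈ valuations p A + valuations p B,
      (#(fibre p (A * B) s) / (setWeight M A * setWeight M B) : ℝ) := by
    refine one_le_sum_add shapeA shapeB
      (fun i hi ↦ div_pos (setWeight_pos M (fibre_nonempty.2 hi)) hwA)
      (fun j hj ↦ div_pos (setWeight_pos M (fibre_nonempty.2 hj)) hwB)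
      hi₀ hj₀ hi_max hj_max (fun s ↦ by positivity) fun i hi j hj ↦ ?_
    rw [div_mul_div_comm]
    gcongr
    exact (hfibre i hi j hj).trans
      (mod_cast card_le_card (fibre_mul_fibre_subset hA₀ hB₀ p i j))
  rw [← sum_div, one_le_div (mul_pos hwA hwB)] at one_le_sum
  rwa [card_mul_eq_sum_card_fibre hA₀ hB₀ p, Nat.cast_sum]

lemma setWeight_mul_le (hM : 2 ≤ M) (hA : A.Nonempty) (hB : B.Nonempty) (hA₀ : 0 ∉ A)
    (hB₀ : 0 ∉ B) : setWeight M A * setWeight M B ≤ #(A * B) := by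
  induction hN : #A + #B using Nat.strong_induction_on generalizing A B with | _ N ih
  by_cases hcard : #A = 1 ∧ #B = 1
  · rw [setWeight_of_card_eq_one M hcard.1, setWeight_of_card_eq_one M hcard.2, one_mul]
    exact_mod_cast card_pos.2 (hA.mul hB)
  obtain ⟨p, hp, hlt⟩ : ∃ p, p.Prime ∧ ∀ i j, #(fibre p A i) + #(fibre p B j) < N := by
    have hA_pos := card_pos.2 hA
    have hB_pos := card_pos.2 hB
    rcases (by omega : 1 < #A ∨ 1 < #B) with h | h
    · obtain ⟨p, hp, hlt⟩ := exists_prime_card_fibre_lt hA₀ h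
      exact ⟨p, hp, fun i j ↦ hN ▸ add_lt_add_of_lt_of_le (hlt i) (card_le_card (fibre_subset ..))⟩
    · obtain ⟨p, hp, hlt⟩ := exists_prime_card_fibre_lt hB₀ h
      exact ⟨p, hp, fun i j ↦ hN ▸ add_lt_add_of_le_of_lt (card_le_card (fibre_subset ..)) (hlt j)⟩
  exact setWeight_mul_le_of_fibre hM hp hA hB hA₀ hB₀ fun i hi j hj ↦
    ih _ (hlt i j) (fibre_nonempty.2 hi) (fibre_nonempty.2 hj)
      (fun h ↦ hA₀ (fibre_subset _ _ _ h)) (fun h ↦ hB₀ (fibre_subset _ _ _ h)) rfl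

lemma card_mul_rpow_le_card_mul_self (hM : 2 ≤ M) (hB : B.Nonempty) (hB₀ : 0 ∉ B) :
    #B * (#B / easyCard M B : ℝ) ^ (2 * gain M) ≤ #(B * B) := by
  have hcard : (0 : ℝ) < #B := mod_cast card_pos.2 hB
  have heasy : (0 : ℝ) < easyCard M B := mod_cast easyCard_pos M hB
  calc #B * (#B / easyCard M B : ℝ) ^ (2 * gain M) = setWeight M B ^ 2 := by
        rw [setWeight, weight, mul_pow, ← Real.rpow_mul_natCast hcard.le,
          ← Real.rpow_mul_natCast heasy.le, Real.div_rpow hcard.le heasy.le, add_mul,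
          Real.rpow_add hcard, neg_mul, Real.rpow_neg heasy.le]
        norm_num
        ring_nf
    _ ≤ #(B * B) := by rw [sq]; exact setWeight_mul_le hM hB hB hB₀ hB₀

end ProductGrowth

section ExponentialSums

open AddCircle ComplexConjugate MeasureTheory

/-- The exponential sum `t ↦ ∑ a ∈ A, e(a t)`. -/
noncomputable def expSum (A : Finset ℕ) : C(UnitAddCircle, ℂ) := ∑ a ∈ A, fourier a

lemma expSum_apply (A : Finset ℕ) (t : UnitAddCircle) : expSum A t = ∑ a ∈ A, fourier a t := by
  simp [expSum]

lemma norm_expSum_le (A : Finset ℕ) (t : UnitAddCircle) : ‖expSum A t‖ ≤ #A := by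
  rw [expSum_apply]
  refine (norm_sum_le _ _).trans_eq ?_
  simp only [fourier_apply, Circle.norm_coe, sum_const, nsmul_one]

lemma integrable_of_continuous {E : Type*} [NormedAddCommGroup E] {f : UnitAddCircle → E}
    (hf : Continuous f) : Integrable f haarAddCircle :=
  hf.integrable_of_hasCompactSupport (.of_compactSpace f)

lemma integral_fourier (n : ℤ) :
    ∫ t : UnitAddCircle, fourier n t ∂haarAddCircle = if n = 0 then 1 else 0 := by
  split_ifs with hn
  · simp [hn]
  · exact integral_eq_zero_of_add_right_eq_neg (fourier_add_half_inv_index hn one_pos)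

lemma prod_fourier {κ : Type*} (s : Finset κ) (n : κ → ℤ) (t : UnitAddCircle) :
    ∏ i ∈ s, fourier (n i) t = fourier (∑ i ∈ s, n i) t := by
  classical
  induction s using Finset.induction_on with
  | empty => rw [prod_empty, sum_empty, fourier_zero]
  | insert i s hi ih => rw [prod_insert hi, sum_insert hi, fourier_add, ih]

lemma sum_fourier_neg (A : Finset ℕ) (t : UnitAddCircle) :
    ∑ a ∈ A, fourier (-a : ℤ) t = conj (expSum A t) := by
  simp only [expSum_apply, map_sum, fourier_neg]

-- In a vanishing sum the smallest `p`-adic valuation is attained at least twice.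
lemma exists_ne_factorization_eq {ι : Type*} [Fintype ι] [Nonempty ι] {p : ℕ}
    (hp : p.Prime) {z : ι → ℤ} (hz : ∀ i, z i ≠ 0) (hsum : ∑ i, z i = 0) :
    ∃ s t, s ≠ t ∧ (z s).natAbs.factorization p = (z t).natAbs.factorization p := by
  classical
  obtain ⟨s, -, hs⟩ :=
    exists_min_image univ (fun i ↦ (z i).natAbs.factorization p) univ_nonempty
  by_contra! hne
  have pow_dvd_iff {n : ℕ} (i : ι) :
      ((p ^ n : ℕ) : ℤ) ∣ z i ↔ n ≤ (z i).natAbs.factorization p := by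
    rw [Int.natCast_dvd, hp.pow_dvd_iff_le_factorization (Int.natAbs_ne_zero.2 (hz i))]
  have dvd_of_ne (t : ι) (ht : t ∈ univ.erase s) :
      ((p ^ ((z s).natAbs.factorization p + 1) : ℕ) : ℤ) ∣ z t :=
    (pow_dvd_iff t).2 ((hs t (mem_univ t)).lt_of_ne (hne s t (ne_of_mem_erase ht).symm))
  have hdvd : ((p ^ ((z s).natAbs.factorization p + 1) : ℕ) : ℤ) ∣ z s :=
    (dvd_add_left (dvd_sum dvd_of_ne)).1 (by rw [add_sum_erase _ _ (mem_univ s), hsum]; simp)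
  exact ((pow_dvd_iff s).1 hdvd).not_gt (Nat.lt_succ_self _)

variable {ι : Type*} [Fintype ι] [DecidableEq ι] {ε : ι → ℤˣ}

/-- The solutions of `∑ i, ε i * x i = 0` with `x i ∈ B i` for all `i`. -/
def zeroSums (ε : ι → ℤˣ) (B : ι → Finset ℕ) : Finset (ι → ℕ) :=
  {x ∈ Fintype.piFinset B | ∑ i, (ε i * x i : ℤ) = 0}

lemma mem_zeroSums {B : ι → Finset ℕ} {x : ι → ℕ} :
    x ∈ zeroSums ε B ↔ (∀ i, x i ∈ B i) ∧ ∑ i, (ε i * x i : ℤ) = 0 := by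
  rw [zeroSums, mem_filter, Fintype.mem_piFinset]

lemma card_zeroSums_eq_integral (ε : ι → ℤˣ) (B : ι → Finset ℕ) :
    (#(zeroSums ε B) : ℂ) =
      ∫ t : UnitAddCircle, ∏ i, ∑ a ∈ B i, fourier (ε i * a : ℤ) t ∂haarAddCircle := by
  simp_rw [prod_univ_sum, prod_fourier]
  rw [integral_finsetSum _ fun x _ ↦ integrable_of_continuous (map_continuous _)]
  simp_rw [integral_fourier, zeroSums, card_filter]
  push_cast
  rfl

lemma norm_sum_fourier_units_mul (A : Finset ℕ) (u : ℤˣ) (t : UnitAddCircle) :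
    ‖∑ a ∈ A, fourier (u * a : ℤ) t‖ = ‖expSum A t‖ := by
  obtain rfl | rfl := Int.units_eq_one_or u
  · simp only [Units.val_one, one_mul, expSum_apply]
  · simp only [Units.val_neg, Units.val_one, neg_one_mul, sum_fourier_neg, RCLike.norm_conj]

lemma card_zeroSums_le (ε : ι → ℤˣ) (B : ι → Finset ℕ) :
    (#(zeroSums ε B) : ℝ) ≤ ∫ t, ∏ i, ‖expSum (B i) t‖ ∂haarAddCircle := by
  rw [← Complex.norm_natCast, card_zeroSums_eq_integral]
  refine (norm_integral_le_integral_norm _).trans_eq ?_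
  simp only [norm_prod, norm_sum_fourier_units_mul]

/-- The `2k`-th moment `∫ |S_A|^(2k)` of the exponential sum of `A`. It counts the solutions of
`x₁ + ⋯ + x_k = y₁ + ⋯ + y_k` in `A`. -/
noncomputable def energy (k : ℕ) (A : Finset ℕ) : ℝ :=
  ∫ t, ‖expSum A t‖ ^ (2 * k) ∂haarAddCircle

/-- The signs of the equation `x₁ + ⋯ + x_k - y₁ - ⋯ - y_k = 0`. -/
def signs (k : ℕ) : Fin k ⊕ Fin k → ℤˣ := Sum.elim 1 (-1)

lemma energy_eq_card_zeroSums (k : ℕ) (A : Finset ℕ) :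
    energy k A = #(zeroSums (signs k) fun _ ↦ A) := by
  have norm_pow_eq (t : UnitAddCircle) : ((‖expSum A t‖ ^ (2 * k) : ℝ) : ℂ) =
      ∏ i, ∑ a ∈ A, fourier (signs k i * a : ℤ) t := by
    rw [Fintype.prod_sum_type]
    simp only [signs, Sum.elim_inl, Sum.elim_inr, Pi.one_apply, Pi.neg_apply, Units.val_one,
      Units.val_neg, one_mul, neg_one_mul, sum_fourier_neg, ← expSum_apply, prod_const, card_univ,
      Fintype.card_fin, ← mul_pow, Complex.mul_conj', pow_mul, Complex.ofReal_pow]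
  rw [← Complex.ofReal_inj, energy, ← integral_complex_ofReal, Complex.ofReal_natCast,
    card_zeroSums_eq_integral]
  simp only [norm_pow_eq]

lemma energy_le_card_pow (k : ℕ) (A : Finset ℕ) : energy k A ≤ #A ^ (2 * k) := by
  rw [energy]
  refine (integral_mono (integrable_of_continuous (by fun_prop)) (integrable_const _) fun t ↦
    pow_le_pow_left₀ (norm_nonneg _) (norm_expSum_le A t) (2 * k)).trans_eq ?_
  simp

/-- The mixed moment `∫ |S_C|² |S_A|^(2m)`. -/
noncomputable def mixedEnergy (m : ℕ) (C A : Finset ℕ) : ℝ :=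
  ∫ t, ‖expSum C t‖ ^ 2 * ‖expSum A t‖ ^ (2 * m) ∂haarAddCircle

lemma card_zeroSums_pair_le {m : ℕ} (hι : Fintype.card ι = 2 * (m + 1)) (ε : ι → ℤˣ)
    (C A : Finset ℕ) {s t : ι} (hst : s ≠ t) :
    #(zeroSums ε fun i ↦ if i ∈ ({s, t} : Finset ι) then C else A) ≤ mixedEnergy m C A := by
  refine (card_zeroSums_le ..).trans_eq ?_
  have hcompl : #({s, t}ᶜ : Finset ι) = 2 * m := by
    rw [card_compl, card_pair hst, hι]
    lia
  refine integral_congr_ae (.of_forall fun θ ↦ ?_)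
  simp only [apply_ite (fun D ↦ ‖expSum D θ‖), prod_ite, prod_const, filter_mem_eq_inter,
    filter_notMem_eq_sdiff, univ_inter, ← compl_eq_univ_sdiff, hcompl, card_pair hst]

lemma zeroSums_subset_biUnion [Nonempty ι] {p : ℕ} (hp : p.Prime) {A : Finset ℕ} (hA : 0 ∉ A) :
    zeroSums ε (fun _ ↦ A) ⊆ (univ.offDiag ×ˢ valuations p A).biUnion fun q ↦
      zeroSums ε fun i ↦ if i ∈ ({q.1.1, q.1.2} : Finset ι) then fibre p A q.2 else A := by
  intro x hx
  obtain ⟨hxA, hsum⟩ := mem_zeroSums.1 hx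
  obtain ⟨s, t, hst, hval⟩ := exists_ne_factorization_eq hp
    (fun i ↦ by simp [ne_of_mem_of_not_mem (hxA i) hA]) hsum
  replace hval : (x s).factorization p = (x t).factorization p := by
    simpa [Int.natAbs_mul] using hval
  refine mem_biUnion.2 ⟨((s, t), (x s).factorization p), ?_, mem_zeroSums.2 ⟨fun i ↦ ?_, hsum⟩⟩
  · simp [hst, factorization_mem_valuations (hxA s)]
  · simp only [mem_insert, mem_singleton]
    split_ifs with hi
    · obtain rfl | rfl := hi <;> simp [mem_fibre, hxA, hval]
    · exact hxA i

lemma energy_le_sum_mixedEnergy {p : ℕ} (hp : p.Prime) (m : ℕ) {A : Finset ℕ} (hA : 0 ∉ A) :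
    energy (m + 1) A ≤
      (2 * (m + 1)) ^ 2 * ∑ j ∈ valuations p A, mixedEnergy m (fibre p A j) A := by
  let ι := Fin (m + 1) ⊕ Fin (m + 1)
  have hι : Fintype.card ι = 2 * (m + 1) := by simp [ι, two_mul]
  have hoff : (#(univ.offDiag : Finset (ι × ι)) : ℝ) ≤ (2 * (m + 1)) ^ 2 := by
    rw [offDiag_card, card_univ, hι, ← sq]
    exact_mod_cast Nat.sub_le ..
  calc
    energy (m + 1) A = #(zeroSums (signs (m + 1)) fun _ ↦ A) := energy_eq_card_zeroSums ..
    _ ≤ ∑ q ∈ univ.offDiag ×ˢ valuations p A, (#(zeroSums (signs (m + 1)) fun i ↦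
        if i ∈ ({q.1.1, q.1.2} : Finset ι) then fibre p A q.2 else A) : ℝ) := by
      exact_mod_cast (card_le_card (zeroSums_subset_biUnion hp hA)).trans card_biUnion_le
    _ ≤ ∑ q ∈ (univ : Finset ι).offDiag ×ˢ valuations p A, mixedEnergy m (fibre p A q.2) A :=
      sum_le_sum fun q hq ↦
        card_zeroSums_pair_le hι _ _ _ (mem_offDiag.1 (mem_product.1 hq).1).2.2
    _ = #(univ.offDiag : Finset (ι × ι)) * ∑ j ∈ valuations p A, mixedEnergy m (fibre p A j) A := by
      simp only [sum_product, sum_const, nsmul_eq_mul]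
    _ ≤ _ := by
      gcongr
      exact sum_nonneg fun _ _ ↦ integral_nonneg fun _ ↦ by positivity

lemma succ_mul_mul_pow_le {x y : ℝ} (hx : 0 ≤ x) (hy : 0 ≤ y) (m : ℕ) :
    (m + 1) * x * y ^ m ≤ x ^ (m + 1) + m * y ^ (m + 1) := by
  induction m with
  | zero => simp
  | succ m ih =>
    have rearrangement : 0 ≤ (x - y) * (x ^ (m + 1) - y ^ (m + 1)) := by
      obtain h | h := le_total x y
      · exact mul_nonneg_of_nonpos_of_nonpos (sub_nonpos.2 h)
          (sub_nonpos.2 (pow_le_pow_left₀ hx h _))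
      · exact mul_nonneg (sub_nonneg.2 h) (sub_nonneg.2 (pow_le_pow_left₀ hy h _))
    push_cast
    linear_combination y * ih + rearrangement

lemma mixedEnergy_le {m : ℕ} {c d : ℝ} (hc : 0 < c) (hd : 0 ≤ d) {C A : Finset ℕ}
    (hC : energy (m + 1) C ≤ c ^ (m + 1)) :
    (m + 1) * d * mixedEnergy m C A ≤ c * (d ^ (m + 1) + m * energy (m + 1) A) := by
  have young (t : UnitAddCircle) :
      (m + 1) * d * (‖expSum C t‖ ^ 2 * ‖expSum A t‖ ^ (2 * m)) ≤
        c * ((d / c) ^ (m + 1) * ‖expSum C t‖ ^ (2 * (m + 1)) +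
          m * ‖expSum A t‖ ^ (2 * (m + 1))) := by
    have := succ_mul_mul_pow_le (x := d / c * ‖expSum C t‖ ^ 2) (y := ‖expSum A t‖ ^ 2)
      (by positivity) (by positivity) m
    rw [mul_pow, ← pow_mul, ← pow_mul, ← pow_mul] at this
    refine le_trans (le_of_eq ?_) (mul_le_mul_of_nonneg_left this hc.le)
    field_simp
  calc
    (m + 1) * d * mixedEnergy m C A ≤
        c * ((d / c) ^ (m + 1) * energy (m + 1) C + m * energy (m + 1) A) := by
      simp only [mixedEnergy, energy, ← integral_const_mul]
      rw [← integral_add (integrable_of_continuous (by fun_prop))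
        (integrable_of_continuous (by fun_prop)), ← integral_const_mul]
      exact integral_mono (integrable_of_continuous (by fun_prop))
        (integrable_of_continuous (by fun_prop)) young
    _ ≤ c * ((d / c) ^ (m + 1) * c ^ (m + 1) + m * energy (m + 1) A) := by gcongr
    _ = c * (d ^ (m + 1) + m * energy (m + 1) A) := by
      rw [← mul_pow, div_mul_cancel₀ d hc.ne']

lemma energy_le_of_energy_fibre_le {p : ℕ} (hp : p.Prime) {m : ℕ} {c : ℝ} (hc : 0 < c)
    {A : Finset ℕ} (hA : 0 ∉ A)
    (hfib : ∀ j, energy (m + 1) (fibre p A j) ≤ (c * #(fibre p A j)) ^ (m + 1)) :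
    energy (m + 1) A ≤ ((2 * (m + 1)) ^ 2 * c * #A) ^ (m + 1) := by
  obtain rfl | hne := A.eq_empty_or_nonempty
  · simpa using energy_le_card_pow (m + 1) ∅
  set d : ℝ := (2 * (m + 1)) ^ 2 * c * #A with hd
  have hd₀ : 0 < d := by
    have := hne.card_pos
    positivity
  have hsum : (m + 1) * d * ∑ j ∈ valuations p A, mixedEnergy m (fibre p A j) A ≤
      c * #A * (d ^ (m + 1) + m * energy (m + 1) A) := by
    rw [card_eq_sum_card_fibre p, Nat.cast_sum, mul_sum, mul_sum, sum_mul]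
    refine sum_le_sum fun j hj ↦ mixedEnergy_le ?_ hd₀.le (hfib j)
    have := (fibre_nonempty.2 hj).card_pos
    positivity
  have hle : (m + 1) * energy (m + 1) A * d ≤ (d ^ (m + 1) + m * energy (m + 1) A) * d := by
    calc
      (m + 1) * energy (m + 1) A * d = (m + 1) * d * energy (m + 1) A := by ring
      _ ≤ (m + 1) * d * ((2 * (m + 1)) ^ 2 *
          ∑ j ∈ valuations p A, mixedEnergy m (fibre p A j) A) := by
        gcongr
        exact energy_le_sum_mixedEnergy hp m hA
      _ = (2 * (m + 1)) ^ 2 * ((m + 1) * d *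
          ∑ j ∈ valuations p A, mixedEnergy m (fibre p A j) A) := by ring
      _ ≤ (2 * (m + 1)) ^ 2 * (c * #A * (d ^ (m + 1) + m * energy (m + 1) A)) := by gcongr
      _ = (d ^ (m + 1) + m * energy (m + 1) A) * d := by
        rw [hd]
        ring
  linarith [le_of_mul_le_mul_right hle hd₀]

lemma QueryComplexityLE.energy_le {n : ℕ} {A : Finset ℕ} (h : QueryComplexityLE n A) (hA : 0 ∉ A)
    (m : ℕ) : energy (m + 1) A ≤ (((2 * (m + 1)) ^ 2) ^ n * #A) ^ (m + 1) := by
  induction h with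
  | @of_card_le_one n A h =>
    refine (energy_le_card_pow ..).trans ?_
    rw [pow_mul]
    gcongr
    have hA₁ : (#A : ℝ) ≤ 1 := by exact_mod_cast h
    have : (1 : ℝ) ≤ ((2 * (m + 1)) ^ 2) ^ n := one_le_pow₀ (one_le_pow₀ (by linarith))
    nlinarith
  | query hp _ ih =>
    rw [pow_succ' (_ ^ 2)]
    exact energy_le_of_energy_fibre_le hp (by positivity) hA
      fun j ↦ ih j fun h ↦ hA (fibre_subset _ _ _ h)

end ExponentialSums

section Chang

lemma sq_card_le_card_mul_card_filter_eq {α β : Type*} [DecidableEq β] {s : Finset α}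
    {t : Finset β} {f : α → β} (hf : ∀ x ∈ s, f x ∈ t) :
    #s ^ 2 ≤ #t * #{z ∈ s ×ˢ s | f z.1 = f z.2} := by
  have hpairs : #{z ∈ s ×ˢ s | f z.1 = f z.2} = ∑ n ∈ t, #{x ∈ s | f x = n} ^ 2 := by
    rw [card_eq_sum_card_fiberwise (f := fun z ↦ f z.1) (t := t) fun z hz ↦ hf _ (by simp_all)]
    refine sum_congr rfl fun n _ ↦ ?_
    rw [sq, ← card_product]
    congr 1
    ext z
    simp only [mem_filter, mem_product]
    grind
  rw [card_eq_sum_card_fiberwise hf, hpairs]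
  exact sq_sum_le_card_mul_sum_sq

lemma card_pow_le_card_nsmul_mul_card_zeroSums (k : ℕ) (A : Finset ℕ) :
    #A ^ (2 * k) ≤ #(k • A) * #(zeroSums (signs k) fun _ ↦ A) := by
  have hsum (x : Fin k → ℕ) (hx : x ∈ Fintype.piFinset fun _ ↦ A) : ∑ i, x i ∈ k • A :=
    mem_nsmul.2 ⟨fun i ↦ ⟨x i, Fintype.mem_piFinset.1 hx i⟩, List.sum_ofFn⟩
  have hcard := sq_card_le_card_mul_card_filter_eq hsum
  rw [Fintype.card_piFinset_const, ← pow_mul, mul_comm k] at hcard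
  refine hcard.trans (Nat.mul_le_mul_left _ ?_)
  refine card_le_card_of_injOn (fun z ↦ Sum.elim z.1 z.2) (fun z hz ↦ ?_) fun z _ w _ h ↦ ?_
  · obtain ⟨⟨hz₁, hz₂⟩, heq⟩ : (_ ∧ _) ∧ _ := by
      simpa only [coe_filter, mem_product, Set.mem_ofPred_eq, Fintype.mem_piFinset] using hz
    refine mem_zeroSums.2 ⟨Sum.rec hz₁ hz₂, ?_⟩
    simp [signs, Fintype.sum_sum_type, ← Nat.cast_sum, heq]
  · exact Prod.ext (funext fun i ↦ congr_fun h (.inl i)) (funext fun i ↦ congr_fun h (.inr i))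

theorem QueryComplexityLE.card_pow_le {n : ℕ} {A : Finset ℕ} (h : QueryComplexityLE n A)
    (hA : 0 ∉ A) (m : ℕ) :
    #A ^ (m + 1) ≤ #((m + 1) • A) * (((2 * (m + 1)) ^ 2) ^ n) ^ (m + 1) := by
  obtain rfl | hne := A.eq_empty_or_nonempty
  · simp
  have henergy : #(zeroSums (signs (m + 1)) fun _ ↦ A) ≤
      (((2 * (m + 1)) ^ 2) ^ n * #A) ^ (m + 1) := by
    exact_mod_cast (energy_eq_card_zeroSums (m + 1) A).symm.trans_le (h.energy_le hA m)
  refine Nat.le_of_mul_le_mul_right ?_ (pow_pos hne.card_pos (m + 1))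
  calc
    #A ^ (m + 1) * #A ^ (m + 1) = #A ^ (2 * (m + 1)) := by rw [← pow_add, two_mul]
    _ ≤ #((m + 1) • A) * (((2 * (m + 1)) ^ 2) ^ n * #A) ^ (m + 1) :=
      (card_pow_le_card_nsmul_mul_card_zeroSums ..).trans (Nat.mul_le_mul_left _ henergy)
    _ = _ := by rw [mul_pow, mul_assoc]

end Chang

section Combination

section Zero

variable {R : Type*} [MonoidWithZero R] [DecidableEq R] {A B : Finset R}

lemma zero_notMem_mul [NoZeroDivisors R] (hA : 0 ∉ A) (hB : 0 ∉ B) : 0 ∉ A * B := by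
  intro h
  obtain ⟨x, hx, y, hy, hxy⟩ := mem_mul.1 h
  obtain rfl | rfl := mul_eq_zero.1 hxy
  exacts [hA hx, hB hy]

lemma zero_notMem_pow [Nontrivial R] [NoZeroDivisors R] (hA : 0 ∉ A) (k : ℕ) : 0 ∉ A ^ k := by
  induction k with
  | zero => simp
  | succ k ih => exact pow_succ A k ▸ zero_notMem_mul ih hA

lemma card_pow_mono [IsRightCancelMulZero R] (hA : 0 ∉ A) (hne : A.Nonempty) :
    Monotone fun k ↦ #(A ^ k) := by
  obtain ⟨a, ha⟩ := hne
  refine monotone_nat_of_le_succ fun k ↦ ?_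
  rw [pow_succ]
  exact card_le_card_mul_right_of_injective ha
    (mul_left_injective₀ (ne_of_mem_of_not_mem ha hA))

end Zero

lemma exists_card_pow_succ_le {α : Type*} [Monoid α] [DecidableEq α] {A : Finset α} (hA : 2 ≤ #A)
    {b l : ℕ} {K : ℝ} (hK : 0 ≤ K) (hKl : #A ^ b ≤ K ^ l) (hpow : #(A ^ 2 ^ l) ≤ #A ^ b) :
    ∃ i < l, #(A ^ 2 ^ (i + 1)) ≤ K * #(A ^ 2 ^ i) := by
  by_contra! hgrow
  have hlower := geom_le hK l fun i hi ↦ (hgrow i hi).le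
  rw [pow_zero, pow_one] at hlower
  have hupper : (#(A ^ 2 ^ l) : ℝ) ≤ #A ^ b := by exact_mod_cast hpow
  have hn : (1 : ℝ) < #A := by exact_mod_cast hA
  nlinarith [pow_pos (zero_lt_one.trans hn) b]

variable {A B : Finset ℕ} {M r : ℕ}

-- Take a most popular product `z`: the divisors of `z` in `A` whose codivisor is in `B` inherit
-- the query complexity of `B`.
lemma QueryComplexityLE.exists_subset (hB : QueryComplexityLE r B) (hA₀ : 0 ∉ A) (hB₀ : 0 ∉ B)
    (hAB : (A * B).Nonempty) :
    ∃ A' ⊆ A, QueryComplexityLE r A' ∧ #A * #B ≤ #(A * B) * #A' := by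
  let rep (z : ℕ) : Finset (ℕ × ℕ) := {q ∈ A ×ˢ B | q.1 * q.2 = z}
  obtain ⟨z, hz, hmax⟩ := exists_max_image (A * B) (fun z ↦ #(rep z)) hAB
  let A' : Finset ℕ := {a ∈ A | z / a ∈ B ∧ a * (z / a) = z}
  have div_eq {q : ℕ × ℕ} (hq : q ∈ rep z) : z / q.1 = q.2 := by
    obtain ⟨hqAB, rfl⟩ := mem_filter.1 hq
    exact Nat.mul_div_cancel_left _
      (Nat.pos_of_ne_zero (ne_of_mem_of_not_mem (mem_product.1 hqAB).1 hA₀))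
  have card_rep_le : #(rep z) ≤ #A' := by
    refine card_le_card_of_injOn Prod.fst (fun q hq ↦ ?_) fun q hq q' hq' h ↦ ?_
    · obtain ⟨hqAB, hqz⟩ := mem_filter.1 hq
      obtain ⟨hqA, hqB⟩ := mem_product.1 hqAB
      exact mem_filter.2 ⟨hqA, by rw [div_eq hq]; exact ⟨hqB, hqz⟩⟩
    · exact Prod.ext h (by rw [← div_eq hq, ← div_eq hq', h])
  refine ⟨A', filter_subset _ _, hB.of_mul_eq (ne_of_mem_of_not_mem hz (zero_notMem_mul hA₀ hB₀))
    (z / ·) (fun a ha ↦ (mem_filter.1 ha).2.1) (fun a ha ↦ (mem_filter.1 ha).2.2), ?_⟩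
  calc
    #A * #B = ∑ z ∈ A * B, #(rep z) := by
      rw [← card_product]
      refine card_eq_sum_card_fiberwise fun q hq ↦ ?_
      exact mul_mem_mul (mem_product.1 hq).1 (mem_product.1 hq).2
    _ ≤ #(A * B) * #(rep z) := sum_le_card_nsmul _ _ _ hmax
    _ ≤ #(A * B) * #A' := Nat.mul_le_mul_left _ card_rep_le

lemma exists_subset_of_card_mul_le (hM : 2 ≤ M) (hA₀ : 0 ∉ A) (hB₀ : 0 ∉ B) (hA : A.Nonempty)
    (hB : B.Nonempty) {K : ℝ} (hBB : #(B * B) ≤ K * #B) (hAB : #(A * B) ≤ K * #B) :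
    ∃ A' ⊆ A, QueryComplexityLE (Nat.log M #B) A' ∧
      #A ≤ K ^ (2 * gain M)⁻¹ * K * #A' := by
  obtain ⟨B', hB'B, hB', hcard⟩ := exists_card_eq_easyCard M B
  have heasy : (0 : ℝ) < easyCard M B := by exact_mod_cast easyCard_pos M hB
  have hB₁ : (0 : ℝ) < #B := by exact_mod_cast hB.card_pos
  have hB'ne : B'.Nonempty := card_pos.1 (hcard ▸ easyCard_pos M hB)
  have hK : 0 ≤ K := nonneg_of_mul_nonneg_left ((Nat.cast_nonneg _).trans hAB) hB₁
  have hratio : #B ≤ K ^ (2 * gain M)⁻¹ * easyCard M B := by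
    rw [← div_le_iff₀ heasy, Real.le_rpow_inv_iff_of_pos (by positivity) hK
      (by linarith [gain_pos M]), ← mul_le_mul_iff_right₀ hB₁, mul_comm _ K]
    exact (card_mul_rpow_le_card_mul_self hM hB hB₀).trans hBB
  obtain ⟨A', hA'A, hA', hcard'⟩ :=
    hB'.exists_subset hA₀ (fun h ↦ hB₀ (hB'B h)) (hA.mul hB'ne)
  refine ⟨A', hA'A, hA', le_of_mul_le_mul_right ?_ heasy⟩
  calc
    (#A * easyCard M B : ℝ) ≤ #(A * B') * #A' := by exact_mod_cast hcard ▸ hcard'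
    _ ≤ #(A * B) * #A' := by gcongr
    _ ≤ K * (K ^ (2 * gain M)⁻¹ * easyCard M B) * #A' := by
      gcongr
      exact hAB.trans (by gcongr)
    _ = _ := by ring

lemma exists_subset_of_card_pow_le (hM : 2 ≤ M) (b : ℕ) :
    ∃ l : ℕ, ∀ A : Finset ℕ, 0 ∉ A → 2 ≤ #A → #(A ^ 2 ^ l) ≤ #A ^ b →
      ∃ A' ⊆ A, ∃ r, QueryComplexityLE r A' ∧ M ^ r ≤ #A ^ b ∧ #A ^ 3 ≤ #A' ^ 4 := by
  set D : ℝ := (2 * gain M)⁻¹ + 1 with hD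
  have hD₀ : 0 < D := by
    have := gain_pos M
    positivity
  refine ⟨⌈4 * D * b⌉₊, fun A hA₀ hA₂ hpow ↦ ?_⟩
  set l := ⌈4 * D * b⌉₊
  have hA : A.Nonempty := card_pos.1 (by lia)
  have hn : (1 : ℝ) < #A := by exact_mod_cast hA₂
  set K : ℝ := #A ^ (4 * D)⁻¹ with hK
  have hK₀ : 0 < K := by positivity
  have hmono := card_pow_mono hA₀ hA
  have hKl : (#A : ℝ) ^ b ≤ K ^ l := by
    rw [hK, ← Real.rpow_mul_natCast (by positivity), ← Real.rpow_natCast,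
      Real.rpow_le_rpow_left_iff hn, ← div_eq_inv_mul, le_div_iff₀' (by positivity)]
    exact Nat.le_ceil _
  obtain ⟨i, hil, hi⟩ := exists_card_pow_succ_le hA₂ hK₀.le hKl hpow
  have hBB : A ^ 2 ^ i * A ^ 2 ^ i = A ^ 2 ^ (i + 1) := by rw [← pow_add, pow_succ 2, mul_two]
  have hAB : #(A * A ^ 2 ^ i) ≤ #(A ^ 2 ^ (i + 1)) := by
    rw [← pow_succ']
    exact hmono (Nat.pow_lt_pow_right one_lt_two i.lt_succ_self)
  obtain ⟨A', hA'A, hA', hcard⟩ := exists_subset_of_card_mul_le hM hA₀ (zero_notMem_pow hA₀ _) hA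
    hA.pow (hBB ▸ hi) ((Nat.cast_le.2 hAB).trans hi)
  refine ⟨A', hA'A, _, hA', (Nat.pow_log_le_self M hA.pow.card_pos.ne').trans
    ((hmono (Nat.pow_le_pow_right two_pos hil.le)).trans hpow), ?_⟩
  have hKD : (K ^ (2 * gain M)⁻¹ * K) ^ 4 = #A := by
    rw [← Real.rpow_add_one hK₀.ne', ← hD, hK, ← Real.rpow_mul (by positivity),
      ← Real.rpow_mul_natCast (by positivity)]
    convert Real.rpow_one _ using 2
    field_simp
    norm_num
  have hcard4 : (#A : ℝ) ^ 4 ≤ #A * #A' ^ 4 := by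
    rw [← hKD, ← mul_pow, hKD]
    exact pow_le_pow_left₀ (by positivity) hcard 4
  refine Nat.le_of_mul_le_mul_left ?_ hA.card_pos
  rw [← pow_succ']
  exact_mod_cast hcard4

theorem exists_card_pow_lt_of_zero_notMem (b : ℕ) (hb : b ≠ 0) :
    ∃ m l : ℕ, ∀ A : Finset ℕ, 0 ∉ A → 2 ≤ #A →
      #A ^ b < #(m • A) ∨ #A ^ b < #(A ^ 2 ^ l) := by
  set m := 2 * b + 1 with hm
  set C := (2 * m) ^ 2 with hC
  have hC₂ : 2 ≤ C := by nlinarith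
  obtain ⟨l, hl⟩ := exists_subset_of_card_pow_le (M := C ^ (4 * b))
    (hC₂.trans (Nat.le_self_pow (by lia) C)) b
  refine ⟨m, l, fun A hA₀ hA₂ ↦ ?_⟩
  by_contra! ⟨hsum, hprod⟩
  obtain ⟨A', hA'A, r, hA', hMr, hcard⟩ := hl A hA₀ hA₂ hprod
  have hCr : (C ^ r) ^ 4 ≤ #A := by
    rw [← Nat.pow_le_pow_iff_left hb]
    exact hMr.trans_eq' (by ring)
  have hchang := hA'.card_pow_le (fun h ↦ hA₀ (hA'A h)) (2 * b)
  have hsum' : #(m • A') ≤ #A ^ b := (card_le_card (nsmul_subset_nsmul_left hA'A)).trans hsum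
  have hpow : #A ^ (3 * m) ≤ #A ^ (4 * b + m) := by
    calc
      #A ^ (3 * m) = (#A ^ 3) ^ m := pow_mul ..
      _ ≤ (#A' ^ 4) ^ m := by gcongr
      _ = (#A' ^ m) ^ 4 := pow_right_comm ..
      _ ≤ (#(m • A') * (C ^ r) ^ m) ^ 4 := by gcongr
      _ = #(m • A') ^ 4 * ((C ^ r) ^ 4) ^ m := by rw [mul_pow, pow_right_comm (C ^ r)]
      _ ≤ (#A ^ b) ^ 4 * #A ^ m := by gcongr
      _ = #A ^ (4 * b + m) := by rw [pow_add _ (4 * b), ← pow_mul, mul_comm b]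
  have := (Nat.pow_le_pow_iff_right hA₂).1 hpow
  lia

end Combination

section Integers

lemma succ_le_card_nsmul {G : Type*} [AddCommMonoid G] [LinearOrder G] [IsOrderedCancelAddMonoid G]
    {A : Finset G} (hA : 2 ≤ #A) (k : ℕ) : k + 1 ≤ #(k • A) := by
  induction k with
  | zero => simp
  | succ k ih =>
    have := cauchy_davenport_add_of_linearOrder_isCancelAdd (s := k • A) (t := A)
      (card_pos.1 (by lia)) (card_pos.1 (by lia))
    rw [succ_nsmul]
    lia

lemma exists_units_mul_mem_card_le (A : Finset ℤ) :
    ∃ (A' : Finset ℕ) (u : ℤˣ), 0 ∉ A' ∧ (∀ a ∈ A', (u * a : ℤ) ∈ A) ∧ #A ≤ 2 * #A' + 1 := by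
  let half (u : ℤˣ) : Finset ℤ := {x ∈ A | 0 < u * x}
  have natAbs_eq {u : ℤˣ} {x : ℤ} (hx : x ∈ half u) : (x.natAbs : ℤ) = u * x := by
    rw [← Int.natAbs_of_nonneg (mem_filter.1 hx).2.le, Int.natAbs_mul, Int.units_natAbs, one_mul]
  have card_image (u : ℤˣ) : #((half u).image Int.natAbs) = #(half u) := by
    refine card_image_of_injOn fun x hx y hy hxy ↦ u.isUnit.mul_left_cancel ?_
    rw [← natAbs_eq hx, ← natAbs_eq hy, hxy]
  suffices h : ∃ u, #A ≤ 2 * #(half u) + 1 by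
    obtain ⟨u, hu⟩ := h
    refine ⟨(half u).image Int.natAbs, u, ?_, ?_, by rwa [card_image]⟩
    · simp +contextual [half]
    · rw [forall_mem_image]
      intro x hx
      rw [natAbs_eq hx, ← mul_assoc, Int.units_coe_mul_self, one_mul]
      exact (mem_filter.1 hx).1
  have hcover : A ⊆ half 1 ∪ half (-1) ∪ {0} := by
    intro x hx
    obtain h | h | h := lt_trichotomy x 0 <;> simp [half, hx, h]
  have hcard : #A ≤ #(half 1) + #(half (-1)) + 1 :=
    (card_le_card hcover).trans ((card_union_le _ _).trans
      (Nat.add_le_add (card_union_le _ _) (card_singleton _).le))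
  obtain h | h := le_total #(half 1) #(half (-1))
  · exact ⟨-1, by lia⟩
  · exact ⟨1, by lia⟩

variable {A : Finset ℤ} {A' : Finset ℕ} {u : ℤˣ}

lemma card_nsmul_le_of_units_mul_mem (hA' : ∀ a ∈ A', (u * a : ℤ) ∈ A) (k : ℕ) :
    #(k • A') ≤ #(k • A) := by
  let f : ℕ →+ ℤ := (AddMonoidHom.mulLeft (u : ℤ)).comp (Nat.castAddMonoidHom ℤ)
  have hf : Function.Injective f := fun x y hxy ↦ by simpa [f] using hxy
  calc
    #(k • A') = #(k • A'.image f) := by rw [← image_nsmul, card_image_of_injective _ hf]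
    _ ≤ #(k • A) := card_le_card (nsmul_subset_nsmul_left (image_subset_iff.2 hA'))

lemma card_pow_le_of_units_mul_mem (hA' : ∀ a ∈ A', (u * a : ℤ) ∈ A) (k : ℕ) :
    #(A' ^ k) ≤ #(A ^ k) := by
  have hsub : A' ⊆ A.image Int.natAbsHom := fun a ha ↦
    mem_image.2 ⟨u * a, hA' a ha, by simp [Int.natAbsHom, Int.natAbs_mul]⟩
  calc
    #(A' ^ k) ≤ #((A ^ k).image Int.natAbsHom) := by
      rw [image_pow]
      exact card_le_card (pow_subset_pow_left hsub)
    _ ≤ #(A ^ k) := card_image_le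

end Integers

end SumProduct

theorem kfold_sum_or_product (b : ℕ) (hb : 0 < b) :
    ∃ k : ℕ, 0 < k ∧ ∀ A : Finset ℤ, 2 ≤ A.card →
      (A.card : ℕ) ^ b < (k • A).card ∨ (A.card : ℕ) ^ b < (A ^ k).card := by
  obtain ⟨m, l, hml⟩ := SumProduct.exists_card_pow_lt_of_zero_notMem (3 * b) (by lia)
  refine ⟨m + 2 ^ l + 3 ^ b, by positivity, fun A hA ↦ ?_⟩
  have hne : A.Nonempty := Finset.card_pos.1 (by lia)
  obtain hA₃ | hA₃ := le_or_gt A.card 3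
  · left
    have := SumProduct.succ_le_card_nsmul hA (m + 2 ^ l + 3 ^ b)
    have := Nat.pow_le_pow_left hA₃ b
    lia
  obtain ⟨A', u, hA'₀, hA'A, hcard⟩ := SumProduct.exists_units_mul_mem_card_le A
  have hA'₂ : 2 ≤ A'.card := by lia
  have hcube : A.card ≤ A'.card ^ 3 := by
    have := Nat.pow_le_pow_left hA'₂ 2
    rw [pow_succ]
    nlinarith
  have hpow : A.card ^ b ≤ A'.card ^ (3 * b) := by
    rw [pow_mul]
    exact Nat.pow_le_pow_left hcube b
  obtain h | h := hml A' hA'₀ hA'₂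
  · exact .inl <| hpow.trans_lt <| h.trans_le <|
      (SumProduct.card_nsmul_le_of_units_mul_mem hA'A m).trans (hne.card_nsmul_mono (by lia))
  · exact .inr <| hpow.trans_lt <| h.trans_le <|
      (SumProduct.card_pow_mono hA'₀ (Finset.card_pos.1 (by lia)) (by lia)).trans
        (SumProduct.card_pow_le_of_units_mul_mem hA'A _)
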